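/- Let ∇ be an ℝ-linear connection of L on E and θ : L → End_C(E) an alternating ℝ-multilinear 1-form such that both ∇ and ∇+θ are flat. Then cs_2(∇, ∇+θ) = −(1/3)·Tr_*(θ∧θ∧θ). -/

import Mathlib

open Module

/-- The trace over `C` of an `ℝ`-linear endomorphism of `E` whose underlying
function happens to be `C`-linear (and `0` otherwise). -/
noncomputable def trR (C : Type*) {E : Type*} [CommRing C] [AddCommGroup E]
    [Module ℝ E] [Module C E] (e : E →ₗ[ℝ] E) : C :=
  letI := Classical.propDecidable
  if h : ∃ g : E →ₗ[C] E, ⇑g = ⇑e then LinearMap.trace C E h.choose else 0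

/-- An ℝ-linear connection of the Lie algebra `L` (with anchor `ρ`) on the `C`-module `E`. -/
def IsConn {L C E : Type*} [LieRing L] [LieAlgebra ℝ L] [CommRing C] [Algebra ℝ C]
    [AddCommGroup E] [Module ℝ E] [Module C E]
    (ρ : L →ₗ[ℝ] Derivation ℝ C C) (D : L →ₗ[ℝ] Module.End ℝ E) : Prop :=
  ∀ (a : L) (f : C) (e : E), D a (f • e) = f • D a e + ρ a f • e

/-- The curvature of an ℝ-linear map `D : L →ₗ[ℝ] End ℝ E`. -/
def curv {L E : Type*} [LieRing L] [LieAlgebra ℝ L] [AddCommGroup E] [Module ℝ E]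
    (D : L →ₗ[ℝ] Module.End ℝ E) (a b : L) : Module.End ℝ E :=
  D a * D b - D b * D a - D ⁅a, b⁆

/-- The curvature as an `End ℝ E`-valued 2-form. -/
def curv2 {L E : Type*} [LieRing L] [LieAlgebra ℝ L] [AddCommGroup E] [Module ℝ E]
    (D : L →ₗ[ℝ] Module.End ℝ E) : (Fin 2 → L) → Module.End ℝ E :=
  fun a => curv D (a 0) (a 1)

/-- The Chevalley–Eilenberg style differential of a `V`-valued `n`-form on `L`,
with respect to an action `act` of `L` on `V`:
`(dω)(a₁,…,a_{n+1}) = Σᵢ (−1)^{i+1} act(aᵢ)(ω(a₁,…,âᵢ,…)) +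
  Σ_{i<j} (−1)^{i+j} ω(⁅aᵢ,aⱼ⁆, a₁,…,âᵢ,…,âⱼ,…)`. -/
def dGen {L V : Type*} [LieRing L] [AddCommGroup V] (act : L → V → V) :
    {n : ℕ} → ((Fin n → L) → V) → ((Fin (n + 1) → L) → V)
  | 0, ω, a => act (a 0) (ω Fin.elim0)
  | (m + 1), ω, a =>
      (∑ i : Fin (m + 2), (-1 : ℤ) ^ (i : ℕ) • act (a i) (ω (fun k => a (i.succAbove k)))) +
      ∑ i : Fin (m + 2), ∑ j : Fin (m + 2),
        if h : (i : ℕ) < (j : ℕ) then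
          (-1 : ℤ) ^ ((i : ℕ) + (j : ℕ)) • ω (Fin.cons ⁅a i, a j⁆
            (fun k : Fin m => a (j.succAbove
              ((⟨(i : ℕ), by have := j.isLt; omega⟩ : Fin (m + 1)).succAbove k))))
        else 0

/-- The differential `d_ρ` on `C`-valued ℝ-linear forms on `L`. -/
def dRho {L C : Type*} [LieRing L] [LieAlgebra ℝ L] [CommRing C] [Algebra ℝ C]
    (ρ : L →ₗ[ℝ] Derivation ℝ C C) {n : ℕ} (ω : (Fin n → L) → C) :
    (Fin (n + 1) → L) → C :=
  dGen (fun a c => ρ a c) ω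

/-- The differential `d^{∇̄}` on `End ℝ E`-valued ℝ-linear forms on `L`,
where `∇̄_a = [∇_a, ·]`. -/
def dEnd {L E : Type*} [LieRing L] [LieAlgebra ℝ L] [AddCommGroup E] [Module ℝ E]
    (D : L →ₗ[ℝ] Module.End ℝ E) {n : ℕ} (ω : (Fin n → L) → Module.End ℝ E) :
    (Fin (n + 1) → L) → Module.End ℝ E :=
  dGen (fun a φ => D a * φ - φ * D a) ω

/-- The wedge product (with composition as multiplication of values) of
`End ℝ E`-valued forms:
`(ω∧η)(a₁,…,a_{m+n}) = (1/(m!·n!)) Σ_{τ} sgn τ · ω(a_{τ(1)},…) ∘ η(a_{τ(m+1)},…)`. -/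
noncomputable def wedge {L E : Type*} [AddCommGroup E] [Module ℝ E] {m n : ℕ}
    (ω : (Fin m → L) → Module.End ℝ E) (η : (Fin n → L) → Module.End ℝ E) :
    (Fin (m + n) → L) → Module.End ℝ E :=
  fun a => ((m.factorial * n.factorial : ℝ))⁻¹ •
    ∑ τ : Equiv.Perm (Fin (m + n)), ((Equiv.Perm.sign τ : ℤ) •
      (ω (fun i => a (τ (Fin.castAdd n i))) * η (fun j => a (τ (Fin.natAdd m j)))))

/-- The `p`-th wedge power of an `End ℝ E`-valued 2-form. -/
noncomputable def wpow {L E : Type*} [AddCommGroup E] [Module ℝ E]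
    (R : (Fin 2 → L) → Module.End ℝ E) :
    (p : ℕ) → (Fin (2 * p) → L) → Module.End ℝ E
  | 0 => fun _ => 1
  | (p + 1) => fun a => wedge R (wpow R p) (fun i => a (Fin.cast (by omega) i))

/-- The `k`-th wedge power of an `End ℝ E`-valued 1-form. -/
noncomputable def wpow1 {L E : Type*} [AddCommGroup E] [Module ℝ E]
    (θ : (Fin 1 → L) → Module.End ℝ E) :
    (k : ℕ) → (Fin k → L) → Module.End ℝ E
  | 0 => fun _ => 1
  | (k + 1) => fun a => wedge θ (wpow1 θ k) (fun i => a (Fin.cast (by omega) i))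

/-- The Chern character form `ch_p(∇) = Tr_*((R^∇)^{∧p})`. -/
noncomputable def chp {L E : Type*} (C : Type*) [LieRing L] [LieAlgebra ℝ L]
    [CommRing C] [AddCommGroup E] [Module ℝ E] [Module C E]
    (D : L →ₗ[ℝ] Module.End ℝ E) (p : ℕ) : (Fin (2 * p) → L) → C :=
  fun a => trR C (wpow (curv2 D) p a)

/-- `∫₀ˢ f(t) dt` for a function `f : ℝ → C` given by a polynomial with
coefficients in the ℝ-algebra `C` (and `0` if `f` is not polynomial). -/
noncomputable def intPolyTo {C : Type*} [CommRing C] [Algebra ℝ C] (s : ℝ) (f : ℝ → C) : C :=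
  letI := Classical.propDecidable
  if h : ∃ P : Polynomial C, ∀ t : ℝ, f t = Polynomial.eval (algebraMap ℝ C t) P then
    ∑ k ∈ Finset.range (h.choose.natDegree + 1),
      (s ^ (k + 1) / ((k : ℝ) + 1)) • h.choose.coeff k
  else 0

/-- The valuewise integral over the standard 2-simplex
`Δ² = {(t₁,t₂) : t₁ ≥ 0, t₂ ≥ 0, t₁ + t₂ ≤ 1}` of a `C`-valued polynomial function. -/
noncomputable def intSimplex2 {C : Type*} [CommRing C] [Algebra ℝ C] (f : ℝ → ℝ → C) : C :=
  intPolyTo 1 (fun t1 => intPolyTo (1 - t1) (fun t2 => f t1 t2))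

/-- The Chern–Simons transgression form for a pair of ℝ-linear connections:
`cs_p(∇⁰,∇¹) = p·∫₀¹ Tr_*(λ ∧ (R_t)^{∧(p−1)}) dt` where `λ = ∇¹ − ∇⁰` and
`R_t` is the curvature of `∇⁰ + t•λ`. -/
noncomputable def csPair {L E : Type*} (C : Type*) [LieRing L] [LieAlgebra ℝ L]
    [CommRing C] [Algebra ℝ C] [AddCommGroup E] [Module ℝ E] [Module C E]
    (D0 D1 : L →ₗ[ℝ] Module.End ℝ E) (p : ℕ) : (Fin (2 * (p - 1) + 1) → L) → C :=
  fun a => (p : ℝ) • intPolyTo 1 (fun t =>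
    trR C (wedge (fun v : Fin 1 → L => (D1 - D0) (v 0))
      (wpow (curv2 (D0 + t • (D1 - D0))) (p - 1))
      (fun i => a (Fin.cast (by omega) i))))

/-- The Chern–Simons transgression form for a triple of ℝ-linear connections:
`cs_p(∇⁰,∇¹,∇²) = −p(p−1)·∫_{Δ²} Tr_*(λ₁ ∧ λ₂ ∧ (R_{(t₁,t₂)})^{∧(p−2)}) dt₁dt₂`
where `λᵢ = ∇ⁱ − ∇⁰` and `R_{(t₁,t₂)}` is the curvature of `∇⁰ + t₁•λ₁ + t₂•λ₂`. -/
noncomputable def csTriple {L E : Type*} (C : Type*) [LieRing L] [LieAlgebra ℝ L]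
    [CommRing C] [Algebra ℝ C] [AddCommGroup E] [Module ℝ E] [Module C E]
    (D0 D1 D2 : L →ₗ[ℝ] Module.End ℝ E) (p : ℕ) : (Fin (2 * (p - 2) + 2) → L) → C :=
  fun a => (-((p : ℝ) * ((p : ℝ) - 1))) • intSimplex2 (fun t1 t2 =>
    trR C (wedge (fun v : Fin 1 → L => (D1 - D0) (v 0))
      (wedge (fun v : Fin 1 → L => (D2 - D0) (v 0))
        (wpow (curv2 (D0 + t1 • (D1 - D0) + t2 • (D2 - D0))) (p - 2)))
      (fun i => a (Fin.cast (by omega) i))))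


/-- The ℝ-linear inclusion `End_C(E) → End_ℝ(E)`. -/
noncomputable def restrEndMap {C E : Type*} [CommRing C] [Algebra ℝ C] [AddCommGroup E]
    [Module ℝ E] [Module C E] [IsScalarTower ℝ C E] :
    (E →ₗ[C] E) →ₗ[ℝ] Module.End ℝ E where
  toFun g := g.restrictScalars ℝ
  map_add' _ _ := rfl
  map_smul' _ _ := rfl

/-!
Along the segment `∇^t = ∇ + t•θ` the curvature is
`R_t = (1 - t)•R_0 + t•R_1 + (t² - t)•(θ∧θ)`, because it is quadratic in `t` with leading
coefficient `θ∧θ` and interpolates `R_0` and `R_1`. For flat endpoints only the last term survives: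
the integrand `Tr_*(θ ∧ R_t^{∧(p-1)})` is `(t² - t)^{p-1}` times a form independent of `t`, and
`p = 2` gives the factor `2·∫₀¹ (t² - t) dt = -1/3`.
-/

section Integration

open scoped Polynomial

-- `A` need not be a domain, so instead of counting roots in `A` apply linear functionals `A → K`.
theorem polynomial_eq_zero_of_forall_eval_algebraMap_eq_zero {K A : Type*} [Field K] [Infinite K]
    [Ring A] [Algebra K A] {P : A[X]} (h : ∀ t : K, P.eval (algebraMap K A t) = 0) : P = 0 := by
  ext k
  refine (forall_dual_apply_eq_zero_iff K _).1 fun φ => ?_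
  let R : K[X] := P.sum fun i c => Polynomial.monomial i (φ c)
  have hφ : ∀ (c : A) (t : K), φ (c * algebraMap K A t) = φ c * t := fun c t => by
    rw [← Algebra.commutes, ← Algebra.smul_def, map_smul, smul_eq_mul, mul_comm]
  have hR : R = 0 := by
    refine Polynomial.funext fun t => ?_
    calc R.eval t = φ (P.eval (algebraMap K A t)) := by
          simp only [R, Polynomial.eval_eq_sum (p := P), Polynomial.sum_def,
            Polynomial.eval_finsetSum, Polynomial.eval_monomial, map_sum, ← map_pow, hφ]
      _ = (0 : K[X]).eval t := by rw [h, map_zero, Polynomial.eval_zero]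
  have hcoeff : R.coeff k = φ (P.coeff k) := by
    simp +contextual [R, Polynomial.sum_def, Polynomial.coeff_monomial]
  rw [← hcoeff, hR, Polynomial.coeff_zero]

variable {C : Type*} [CommRing C] [Algebra ℝ C]

theorem intPolyTo_eval (s : ℝ) (P : C[X]) :
    intPolyTo s (fun t => P.eval (algebraMap ℝ C t))
      = P.sum fun k c => (s ^ (k + 1) / ((k : ℝ) + 1)) • c := by
  have hex : ∃ Q : C[X], ∀ t : ℝ,
      P.eval (algebraMap ℝ C t) = Q.eval (algebraMap ℝ C t) := ⟨P, fun _ => rfl⟩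
  have hchoose : hex.choose = P := by
    rw [← sub_eq_zero]
    refine polynomial_eq_zero_of_forall_eval_algebraMap_eq_zero (K := ℝ) fun t => ?_
    rw [Polynomial.eval_sub, ← hex.choose_spec t, sub_self]
  rw [intPolyTo, dif_pos hex, hchoose, Polynomial.sum_over_range _ fun _ => smul_zero _]

theorem intervalIntegral_eval_polynomial (s : ℝ) (P : ℝ[X]) :
    ∫ t in (0 : ℝ)..s, P.eval t = P.sum fun k c => (s ^ (k + 1) / ((k : ℝ) + 1)) * c := by
  simp only [Polynomial.eval_eq_sum, Polynomial.sum_def]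
  rw [intervalIntegral.integral_finsetSum fun k _ => by
    exact (by fun_prop : Continuous _).intervalIntegrable _ _]
  simp [mul_comm]

theorem intPolyTo_eval_smul (s : ℝ) (P : ℝ[X]) (c : C) :
    intPolyTo s (fun t => P.eval t • c) = (∫ t in (0 : ℝ)..s, P.eval t) • c := by
  have hP : ∀ t : ℝ, P.eval t • c
      = (P.map (algebraMap ℝ C) * Polynomial.C c).eval (algebraMap ℝ C t) := fun t => by
    rw [Polynomial.eval_mul, Polynomial.eval_C, Polynomial.eval_map_algebraMap,
      Polynomial.aeval_algebraMap_apply_eq_algebraMap_eval, Algebra.smul_def]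
  have hdeg : (P.map (algebraMap ℝ C) * Polynomial.C c).natDegree < P.natDegree + 1 :=
    Nat.lt_succ_of_le <| (Polynomial.natDegree_mul_C_le _ c).trans Polynomial.natDegree_map_le
  simp only [hP]
  rw [intPolyTo_eval, intervalIntegral_eval_polynomial,
    Polynomial.sum_over_range' _ (fun _ => smul_zero _) _ hdeg,
    Polynomial.sum_over_range _ fun _ => mul_zero _, Finset.sum_smul]
  refine Finset.sum_congr rfl fun k _ => ?_
  rw [Polynomial.coeff_mul_C, Polynomial.coeff_map, ← Algebra.smul_def, smul_smul]

end Integration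

section Trace

variable {C E : Type*} [CommRing C] [AddCommGroup E] [Module ℝ E] [Module C E]

theorem trR_eq_trace {e : Module.End ℝ E} {g : E →ₗ[C] E} (h : ⇑g = ⇑e) :
    trR C e = LinearMap.trace C E g := by
  have hex : ∃ g : E →ₗ[C] E, ⇑g = ⇑e := ⟨g, h⟩
  rw [trR, dif_pos hex, DFunLike.coe_injective (hex.choose_spec.trans h.symm)]

-- For `t ≠ 0`, `t • e` is `C`-linear exactly when `e` is, so the junk value `0` causes no trouble.
theorem trR_smul [Algebra ℝ C] [IsScalarTower ℝ C E] (t : ℝ) (e : Module.End ℝ E) :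
    trR C (t • e) = t • trR C e := by
  have coe_smul : ∀ (s : ℝ) {f : Module.End ℝ E} {g : E →ₗ[C] E}, ⇑g = ⇑f →
      ⇑(algebraMap ℝ C s • g) = ⇑(s • f) := fun s f g h => by
    ext x
    rw [LinearMap.smul_apply, LinearMap.smul_apply, algebraMap_smul, h]
  by_cases he : ∃ g : E →ₗ[C] E, ⇑g = ⇑e
  · obtain ⟨g, hg⟩ := he
    rw [trR_eq_trace (coe_smul t hg), trR_eq_trace hg, map_smul, algebraMap_smul]
  rcases eq_or_ne t 0 with rfl | ht
  · rw [zero_smul, zero_smul, trR_eq_trace (C := C) (g := 0) rfl, map_zero]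
  · have hte : ¬∃ g : E →ₗ[C] E, ⇑g = ⇑(t • e) := fun ⟨g, hg⟩ =>
      he ⟨algebraMap ℝ C t⁻¹ • g, by rw [coe_smul t⁻¹ hg, inv_smul_smul₀ ht]⟩
    rw [trR, dif_neg hte, trR, dif_neg he, smul_zero]

end Trace

/-- A linear map `α : L → End ℝ E` viewed as a 1-form, in the encoding of `n`-forms as functions
on `Fin n → L` that `wedge` acts on. -/
def oneForm {L E : Type*} [AddCommGroup L] [Module ℝ L] [AddCommGroup E] [Module ℝ E]
    (α : L →ₗ[ℝ] Module.End ℝ E) : (Fin 1 → L) → Module.End ℝ E :=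
  fun u => α (u 0)

section Wedge

variable {L E : Type*} [AddCommGroup E] [Module ℝ E] {m n : ℕ}

theorem wedge_smul_left (c : ℝ) (ω : (Fin m → L) → Module.End ℝ E)
    (η : (Fin n → L) → Module.End ℝ E) : wedge (c • ω) η = c • wedge ω η := by
  ext1 a
  simp only [wedge, Pi.smul_apply, smul_mul_assoc, smul_comm _ c, ← Finset.smul_sum]

theorem wedge_smul_right (c : ℝ) (ω : (Fin m → L) → Module.End ℝ E)
    (η : (Fin n → L) → Module.End ℝ E) : wedge ω (c • η) = c • wedge ω η := by
  ext1 a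
  simp only [wedge, Pi.smul_apply, mul_smul_comm, smul_comm _ c, ← Finset.smul_sum]

theorem wpow_smul (c : ℝ) (R : (Fin 2 → L) → Module.End ℝ E) (p : ℕ) :
    wpow (c • R) p = c ^ p • wpow R p := by
  induction p with
  | zero => rw [pow_zero, one_smul]; rfl
  | succ p ih =>
    ext1 a
    simp only [wpow, ih, wedge_smul_left, wedge_smul_right, smul_smul, Pi.smul_apply, ← pow_succ]

theorem wedge_comp_perm (ω : (Fin m → L) → Module.End ℝ E) (η : (Fin n → L) → Module.End ℝ E)
    (a : Fin (m + n) → L) (σ : Equiv.Perm (Fin (m + n))) :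
    wedge ω η (a ∘ σ) = (Equiv.Perm.sign σ : ℤ) • wedge ω η a := by
  rw [wedge, wedge, smul_comm (Equiv.Perm.sign σ : ℤ)]
  congr 1
  rw [Finset.smul_sum]
  refine Fintype.sum_equiv (Equiv.mulLeft σ) _ _ fun τ => ?_
  rw [smul_smul, Equiv.coe_mulLeft, Equiv.Perm.sign_mul, Units.val_mul, ← mul_assoc,
    ← Units.val_mul, Int.units_mul_self, Units.val_one, one_mul]
  rfl

theorem wedge_one (ω : (Fin m → L) → Module.End ℝ E)
    (hω : ∀ (a : Fin m → L) (σ : Equiv.Perm (Fin m)),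
      ω (a ∘ σ) = (Equiv.Perm.sign σ : ℤ) • ω a) :
    wedge (n := 0) ω (fun _ => 1) = ω := by
  ext1 a
  have hterm : ∀ τ : Equiv.Perm (Fin m), (Equiv.Perm.sign τ : ℤ) • ω (a ∘ τ) = ω a := fun τ => by
    rw [hω, smul_smul, ← Units.val_mul, Int.units_mul_self, Units.val_one, one_smul]
  calc wedge (n := 0) ω (fun _ => 1) a
      = ((m.factorial * Nat.factorial 0 : ℝ))⁻¹ •
          ∑ τ : Equiv.Perm (Fin m), (Equiv.Perm.sign τ : ℤ) • (ω (a ∘ τ) * 1) := rfl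
    _ = (m.factorial : ℝ)⁻¹ • (m.factorial : ℝ) • ω a := by
        simp only [mul_one, hterm, Finset.sum_const, Finset.card_univ, Fintype.card_perm,
          Fintype.card_fin, Nat.factorial_zero, Nat.cast_one, Nat.cast_smul_eq_nsmul]
    _ = ω a := inv_smul_smul₀ (Nat.cast_ne_zero.2 m.factorial_ne_zero) _

theorem wpow_wedge_one (α β : (Fin 1 → L) → Module.End ℝ E) :
    wpow (wedge α β) 1 = wedge α β :=
  wedge_one _ (wedge_comp_perm α β)

theorem wedge_oneForm [AddCommGroup L] [Module ℝ L] (α β : L →ₗ[ℝ] Module.End ℝ E)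
    (a : Fin 2 → L) :
    wedge (oneForm α) (oneForm β) a = α (a 0) * β (a 1) - α (a 1) * β (a 0) := by
  have hperm : (Finset.univ : Finset (Equiv.Perm (Fin (1 + 1)))) = {1, Equiv.swap 0 1} := by
    decide
  rw [wedge, hperm, Finset.sum_pair (by decide), Equiv.Perm.sign_swap (by decide)]
  simp [oneForm, sub_eq_add_neg]

end Wedge

section ChernSimons

variable {L E : Type*} [LieRing L] [LieAlgebra ℝ L] [AddCommGroup E] [Module ℝ E]

theorem curv2_add_smul_sub (D₀ D₁ : L →ₗ[ℝ] Module.End ℝ E) (t : ℝ) :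
    curv2 (D₀ + t • (D₁ - D₀)) = (1 - t) • curv2 D₀ + t • curv2 D₁
      + (t ^ 2 - t) • wedge (oneForm (D₁ - D₀)) (oneForm (D₁ - D₀)) := by
  ext1 a
  simp only [curv2, curv, Pi.add_apply, Pi.smul_apply, wedge_oneForm, LinearMap.add_apply,
    LinearMap.sub_apply, LinearMap.smul_apply, mul_add, add_mul, mul_sub, sub_mul,
    smul_mul_assoc, mul_smul_comm]
  module

theorem csPair_of_curv_eq_zero {C : Type*} [CommRing C] [Algebra ℝ C] [Module C E]
    [IsScalarTower ℝ C E] {D₀ D₁ : L →ₗ[ℝ] Module.End ℝ E} (h₀ : ∀ a b, curv D₀ a b = 0)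
    (h₁ : ∀ a b, curv D₁ a b = 0) (p : ℕ) (v : Fin (2 * (p - 1) + 1) → L) :
    csPair C D₀ D₁ p v = (p * ∫ t in (0 : ℝ)..1, (t ^ 2 - t) ^ (p - 1)) •
      trR C (wedge (oneForm (D₁ - D₀))
        (wpow (wedge (oneForm (D₁ - D₀)) (oneForm (D₁ - D₀))) (p - 1))
        (fun i => v (Fin.cast (by omega) i))) := by
  set θ := oneForm (D₁ - D₀)
  set a : Fin (1 + 2 * (p - 1)) → L := fun i => v (Fin.cast (by omega) i)
  let ω : (Fin 2 → L) → Module.End ℝ E := wedge θ θ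
  have hcurv : ∀ t : ℝ, curv2 (D₀ + t • (D₁ - D₀)) = (t ^ 2 - t) • ω := fun t => by
    have hflat₀ : curv2 D₀ = 0 := funext fun _ => h₀ _ _
    have hflat₁ : curv2 D₁ = 0 := funext fun _ => h₁ _ _
    rw [curv2_add_smul_sub, hflat₀, hflat₁, smul_zero, smul_zero, zero_add, zero_add]
  let P : Polynomial ℝ := (Polynomial.X ^ 2 - Polynomial.X) ^ (p - 1)
  have hP : ∀ t : ℝ, P.eval t = (t ^ 2 - t) ^ (p - 1) := fun t => by
    rw [Polynomial.eval_pow, Polynomial.eval_sub, Polynomial.eval_pow, Polynomial.eval_X]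
  calc csPair C D₀ D₁ p v
      = (p : ℝ) • intPolyTo 1 fun t =>
          trR C (wedge θ (wpow (curv2 (D₀ + t • (D₁ - D₀))) (p - 1)) a) := rfl
    _ = (p : ℝ) • intPolyTo 1 fun t => P.eval t • trR C (wedge θ (wpow ω (p - 1)) a) := by
        simp only [hcurv, hP, wpow_smul, wedge_smul_right, Pi.smul_apply, trR_smul]
    _ = (p * ∫ t in (0 : ℝ)..1, (t ^ 2 - t) ^ (p - 1)) •
          trR C (wedge θ (wpow ω (p - 1)) a) := by
        rw [intPolyTo_eval_smul, smul_smul]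
        simp only [hP]

theorem stmt18_general {C : Type*} [CommRing C] [Algebra ℝ C] [Module C E]
    [IsScalarTower ℝ C E] [Module.Finite C E] [Module.Free C E]
    (D : L →ₗ[ℝ] Module.End ℝ E) (θ : L →ₗ[ℝ] (E →ₗ[C] E))
    (hflat : ∀ a b : L, curv D a b = 0)
    (hflat' : ∀ a b : L, curv (D + restrEndMap.comp θ) a b = 0)
    (v : Fin 3 → L) :
    csPair C D (D + restrEndMap.comp θ) 2 v
      = -(1 / 3 : ℝ) •
          trR C (wedge (oneForm (restrEndMap.comp θ))
            (wedge (oneForm (restrEndMap.comp θ)) (oneForm (restrEndMap.comp θ))) v) := by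
  have hint : ((2 : ℕ) : ℝ) * ∫ t in (0 : ℝ)..1, (t ^ 2 - t) ^ (2 - 1) = -(1 / 3) := by
    norm_num [intervalIntegral.integral_sub]
  rw [csPair_of_curv_eq_zero hflat hflat', hint, add_sub_cancel_left]
  simp only [Nat.add_one_sub_one, wpow_wedge_one]
  rfl

end ChernSimons

/-- if `∇` and `∇+θ` are flat, then
`cs_2(∇, ∇+θ) = −(1/3)·Tr_*(θ∧θ∧θ)`. -/
theorem stmt18 {L : Type*} {C : Type*} {E : Type*}
    [LieRing L] [LieAlgebra ℝ L] [CommRing C] [Algebra ℝ C] [Module C L]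
    [AddCommGroup E] [Module ℝ E] [Module C E] [IsScalarTower ℝ C E]
    [Module.Finite C E] [Module.Free C E]
    (ρ : L →ₗ[ℝ] Derivation ℝ C C)
    (hρ : ∀ (a b : L) (f : C), ρ ⁅a, b⁆ f = ρ a (ρ b f) - ρ b (ρ a f))
    (hLeib : ∀ (a b : L) (f : C), ⁅a, f • b⁆ = f • ⁅a, b⁆ + ρ a f • b)
    (D : L →ₗ[ℝ] Module.End ℝ E) (hD : IsConn ρ D)
    (θ : L →ₗ[ℝ] (E →ₗ[C] E))
    (hflat : ∀ a b : L, curv D a b = 0)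
    (hflat' : ∀ a b : L, curv (D + restrEndMap.comp θ) a b = 0) :
    ∀ v : Fin (2 * (2 - 1) + 1) → L,
      csPair C D (D + restrEndMap.comp θ) 2 v
        = -(1 / 3 : ℝ) •
            trR C (wedge (fun u : Fin 1 → L => ((θ (u 0)).restrictScalars ℝ))
              (wedge (fun u : Fin 1 → L => ((θ (u 0)).restrictScalars ℝ))
                (fun u : Fin 1 → L => ((θ (u 0)).restrictScalars ℝ)))
              (fun i => v (Fin.cast (by omega) i))) := by
  exact stmt18_general D θ hflat hflat'
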